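/- arXiv:1803.03138 — 6 statements merged into one kernel-verified Lean document; each statement's English description precedes it below -/
import Mathlib

section
/- Let V be a finite-dimensional vector space over 𝔽₂ and B a nondegenerate alternating bilinear form on V. For any two quadratic refinements q and q′ of B there exists a unique p ∈ V such that q′ x = q x + B p x for all x ∈ V. In other words, the action of V on the set of quadratic refinements given by (p • q) x = q x + B p x is simply transitive. -/
/-!
Two refinements of the same form have the same polarization, so their difference is additive, hence
`ZMod n`-linear, and a perfect form represents every linear functional by exactly one vector.
-/

open QuadraticMap (polar)

theorem sub_map_add_of_polar_eq {M N : Type*} [AddCommGroup M] [AddCommGroup N] {q q' : M → N}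
    {x y : M} (h : polar q x y = polar q' x y) :
    (q' - q) (x + y) = (q' - q) x + (q' - q) y := by
  have polar_sub : polar (q' - q) x y = 0 := by
    rw [sub_eq_add_neg, QuadraticMap.polar_add, QuadraticMap.polar_neg, h, add_neg_cancel]
  rw [QuadraticMap.map_add (q' - q), polar_sub, add_zero]

theorem existsUnique_linearMap_of_polar_eq {n : ℕ} {M N : Type*} [AddCommGroup M] [AddCommGroup N]
    [Module (ZMod n) M] [Module (ZMod n) N] {q q' : M → N} (h : polar q = polar q') :
    ∃! d : M →ₗ[ZMod n] N, ∀ x, q' x = q x + d x := by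
  let difference : M →+ N :=
    AddMonoidHom.mk' (q' - q) fun x y ↦ sub_map_add_of_polar_eq (congr_fun₂ h x y)
  refine ⟨difference.toZModLinearMap n, fun x ↦ (add_sub_cancel (q x) (q' x)).symm, fun d hd ↦ ?_⟩
  ext x
  exact eq_sub_of_add_eq' (hd x).symm

theorem bijective_toDual_of_injective {K V : Type*} [Field K] [AddCommGroup V] [Module K V]
    [FiniteDimensional K V] {B : V →ₗ[K] Module.Dual K V} (hB : Function.Injective B) :
    Function.Bijective B :=
  (B.linearEquivOfInjective hB Subspace.dual_finrank_eq.symm).bijective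

theorem quadratic_refinements_torsor_general {n : ℕ} {V N : Type*} [AddCommGroup V]
    [AddCommGroup N] [Module (ZMod n) V] [Module (ZMod n) N] {B : V →ₗ[ZMod n] V →ₗ[ZMod n] N}
    (hB : Function.Bijective B) {q q' : V → N} (hq : ∀ x y, polar q x y = B x y)
    (hq' : ∀ x y, polar q' x y = B x y) :
    ∃! p : V, ∀ x, q' x = q x + B p x := by
  have polar_eq : polar q = polar q' := funext₂ fun x y ↦ (hq x y).trans (hq' x y).symm
  exact hB.existsUnique_iff.1 (existsUnique_linearMap_of_polar_eq polar_eq)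

/-- For a nondegenerate alternating bilinear form `B` on a finite-dimensional
`𝔽₂`-vector space, any two quadratic refinements `q`, `q'` of `B` differ by `B p ·`
for a unique `p`: the action `(p • q) x = q x + B p x` on refinements is simply
transitive. -/
theorem quadratic_refinements_torsor
    (V : Type*) [AddCommGroup V] [Module (ZMod 2) V] [FiniteDimensional (ZMod 2) V]
    (B : V →ₗ[ZMod 2] V →ₗ[ZMod 2] ZMod 2) (hB : ∀ v : V, B v v = 0)
    (hnd : ∀ v : V, B v = 0 → v = 0)
    (q q' : V → ZMod 2)
    (hq : ∀ x y : V, q (x + y) + q x + q y = B x y)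
    (hq' : ∀ x y : V, q' (x + y) + q' x + q' y = B x y) :
    ∃! p : V, ∀ x : V, q' x = q x + B p x := by
  simp only [← CharTwo.sub_eq_add (R := ZMod 2)] at hq hq'
  exact quadratic_refinements_torsor_general
    (bijective_toDual_of_injective ((injective_iff_map_eq_zero B).2 hnd)) hq hq'
end

section
/- Let V be a vector space over 𝔽₂ of dimension 2g, B a nondegenerate alternating bilinear form on V, and q a quadratic refinement of B. Then the Gauss sum Σ_{v ∈ V} (−1)^(q v) (the sum over all v of +1 if q v = 0 and −1 if q v = 1, taken in ℤ) satisfies (Σ_{v ∈ V} (−1)^(q v))² = 2^(2g). -/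
/-!
Write the product `(∑ x, ψ (q x)) * (∑ y, ψ (-q y))` as a double sum and substitute `x = z + y`.
Since `q (z + y) - q y = q z + B z y`, the inner sum over `y` becomes the sum of the additive
character `ψ ∘ B z`, which vanishes unless `z = 0` by nondegeneracy; only the `|V|` terms with
`z = 0` survive. Over `𝔽₂`, with `ψ a = (-1) ^ a`, the two factors coincide.
-/

/-- A quadratic refinement of a bilinear map `B` is a function whose polarization is `B`. Only
the polarization is prescribed, so `q` may have an additive part: `q (a • x) = a ^ 2 • q x` is not
required. -/
def IsQuadraticRefinement {k V M : Type*} [CommRing k] [AddCommGroup V] [Module k V]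
    [AddCommGroup M] [Module k M] (B : V →ₗ[k] V →ₗ[k] M) (q : V → M) : Prop :=
  ∀ x y, QuadraticMap.polar q x y = B x y

namespace IsQuadraticRefinement

variable {k V M R : Type*} [CommRing k] [AddCommGroup V] [Module k V]
  [AddCommGroup M] [Module k M] {B : V →ₗ[k] V →ₗ[k] M} {q : V → M}

protected theorem map_add (hq : IsQuadraticRefinement B q) (x y : V) :
    q (x + y) = q x + q y + B x y := by
  rw [← hq x y, QuadraticMap.polar]
  abel

protected theorem map_zero (hq : IsQuadraticRefinement B q) : q 0 = 0 := by
  simpa using hq.map_add 0 0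

theorem addChar_map_add_mul_addChar_neg [CommMonoid R] (hq : IsQuadraticRefinement B q)
    (ψ : AddChar M R) (z y : V) : ψ (q (z + y)) * ψ (-q y) = ψ (q z) * ψ (B z y) := by
  rw [← ψ.map_add_eq_mul, ← ψ.map_add_eq_mul, hq.map_add]
  congr 1
  abel

theorem sum_addChar_mul_sum_addChar_neg [Fintype V] [CommSemiring R]
    (hq : IsQuadraticRefinement B q) (ψ : AddChar M R) :
    (∑ x, ψ (q x)) * ∑ y, ψ (-q y) = ∑ z, ψ (q z) * ∑ y, ψ (B z y) := by
  calc (∑ x, ψ (q x)) * ∑ y, ψ (-q y)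
      = ∑ y, ∑ x, ψ (q x) * ψ (-q y) := by
        rw [Finset.sum_mul_sum, Finset.sum_comm]
    _ = ∑ y, ∑ z, ψ (q (z + y)) * ψ (-q y) :=
        Finset.sum_congr rfl fun y _ =>
          (Equiv.sum_comp (Equiv.addRight y) fun x => ψ (q x) * ψ (-q y)).symm
    _ = ∑ z, ψ (q z) * ∑ y, ψ (B z y) := by
        rw [Finset.sum_comm]
        simp only [hq.addChar_map_add_mul_addChar_neg, Finset.mul_sum]

end IsQuadraticRefinement

theorem sum_addChar_comp_eq_zero {G M R : Type*} [AddGroup G] [Fintype G] [AddMonoid M]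
    [CommSemiring R] [IsDomain R] (ψ : AddChar M R) (f : G →+ M) {x : G}
    (hx : ψ (f x) ≠ 1) : ∑ y, ψ (f y) = 0 := by
  classical
  have hne : ψ.compAddMonoidHom f ≠ 0 := AddChar.ne_zero_iff.2 ⟨x, hx⟩
  exact (AddChar.sum_eq_ite (ψ.compAddMonoidHom f)).trans (if_neg hne)

theorem gauss_sum_of_quadratic_refinement_sq_general {k V M R : Type*} [CommRing k]
    [AddCommGroup V] [Module k V] [Fintype V] [AddCommGroup M] [Module k M]
    [CommSemiring R] [IsDomain R] (ψ : AddChar M R) {B : V →ₗ[k] V →ₗ[k] M} {q : V → M}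
    (hq : IsQuadraticRefinement B q) (hnd : ∀ z, (∀ y, ψ (B z y) = 1) → z = 0) :
    (∑ x, ψ (q x)) * ∑ y, ψ (-q y) = Fintype.card V := by
  have sum_eq_zero (z : V) (hz : z ≠ 0) : ∑ y, ψ (B z y) = 0 := by
    obtain ⟨w, hw⟩ := not_forall.1 (mt (hnd z) hz)
    exact sum_addChar_comp_eq_zero ψ (B z).toAddMonoidHom hw
  calc (∑ x, ψ (q x)) * ∑ y, ψ (-q y)
      = ∑ z, ψ (q z) * ∑ y, ψ (B z y) := hq.sum_addChar_mul_sum_addChar_neg ψ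
    _ = ψ (q 0) * ∑ y, ψ (B 0 y) :=
        Fintype.sum_eq_single 0 fun z hz => by rw [sum_eq_zero z hz, mul_zero]
    _ = Fintype.card V := by simp [hq.map_zero]

theorem neg_one_pow_zmod_val_eq_one_iff (a : ZMod 2) : (-1 : ℤ) ^ a.val = 1 ↔ a = 0 := by
  decide +revert

/-- The Gauss sum of a quadratic refinement `q` of a nondegenerate alternating bilinear
form on a `2g`-dimensional `𝔽₂`-vector space satisfies `(Σ_v (-1)^(q v))² = 2^(2g)`. -/
theorem gauss_sum_of_quadratic_refinement_sq
    (V : Type*) [AddCommGroup V] [Module (ZMod 2) V] [Fintype V] (g : ℕ)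
    (hdim : Module.finrank (ZMod 2) V = 2 * g)
    (B : V →ₗ[ZMod 2] V →ₗ[ZMod 2] ZMod 2) (hB : ∀ v : V, B v v = 0)
    (hnd : ∀ v : V, B v = 0 → v = 0)
    (q : V → ZMod 2) (hq : ∀ x y : V, q (x + y) + q x + q y = B x y) :
    (∑ v : V, (-1 : ℤ) ^ (q v).val) ^ 2 = 2 ^ (2 * g) := by
  have hcard : Fintype.card V = 2 ^ (2 * g) := by
    rw [Module.card_eq_pow_finrank (K := ZMod 2), hdim, ZMod.card]
  have hqB : IsQuadraticRefinement B q := fun x y => by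
    rw [QuadraticMap.polar, CharTwo.sub_eq_add, CharTwo.sub_eq_add, hq]
  have hker (z : V) (hz : ∀ y, (-1 : ℤ) ^ (B z y).val = 1) : z = 0 :=
    hnd z <| LinearMap.ext fun y => (neg_one_pow_zmod_val_eq_one_iff _).1 (hz y)
  simpa only [AddChar.zmodChar_apply, CharTwo.neg_eq, ← sq, hcard, Nat.cast_pow, Nat.cast_ofNat]
    using gauss_sum_of_quadratic_refinement_sq_general
      (AddChar.zmodChar 2 (neg_one_sq (R := ℤ))) hqB hker
end

section
/- Let V be a vector space over 𝔽₂ of dimension 2g, B a nondegenerate alternating bilinear form on V, and q a quadratic refinement of B. Then the number of v ∈ V with q v = 0 is either 2^(2g−1) + 2^(g−1) or 2^(2g−1) − 2^(g−1). -/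
/-!
Let `ψ` be the nontrivial character of `𝔽₂`. In `(∑ x, ψ (q x)) ^ 2 = ∑ x y, ψ (q x - q y)`
substitute `x = z + y`: the inner sum over `y` becomes `ψ (q z) * ∑ y, ψ (B z y)`, which vanishes
for `z ≠ 0` by orthogonality of characters. Hence the Gauss sum `∑ x, ψ (q x)` is a square root of
`|V| = 2 ^ (2 * g)`, and it is also the number of zeros minus the number of nonzeros of `q`.
-/

open Finset
open QuadraticMap (polar)

section GaussSum

variable {R M N S : Type*} [CommRing R] [AddCommGroup M] [Module R M] [AddCommGroup N] [Module R N]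
  {q : M → N} {B : M →ₗ[R] M →ₗ[R] N}

theorem map_zero_of_polar_eq_bilin (hq : ∀ x y, polar q x y = B x y) : q 0 = 0 := by
  simpa [polar] using hq 0 0

theorem map_add_sub_of_polar_eq_bilin (hq : ∀ x y, polar q x y = B x y) (z y : M) :
    q (z + y) - q y = q z + B z y := by
  rw [← hq, polar]
  abel

theorem sum_addChar_mul_sum_addChar_neg [Fintype M] [CommRing S] [IsDomain S] (ψ : AddChar N S)
    (hψ : ∀ z ≠ 0, ψ.compAddMonoidHom (B z).toAddMonoidHom ≠ 1)
    (hq : ∀ x y, polar q x y = B x y) :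
    (∑ x, ψ (q x)) * ∑ y, ψ (-q y) = Fintype.card M := by
  have orthogonality (z : M) (hz : z ≠ 0) : ∑ y, ψ (B z y) = 0 :=
    AddChar.sum_eq_zero_of_ne_one (hψ z hz)
  calc (∑ x, ψ (q x)) * ∑ y, ψ (-q y)
      = ∑ y, ∑ x, ψ (q x - q y) := by
        simp only [sum_mul_sum, ← AddChar.map_add_eq_mul, ← sub_eq_add_neg]
        exact sum_comm
    _ = ∑ y, ∑ z, ψ (q (z + y) - q y) :=
        sum_congr rfl fun y _ ↦ (Equiv.sum_comp (Equiv.addRight y) fun x ↦ ψ (q x - q y)).symm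
    _ = ∑ z, ψ (q z) * ∑ y, ψ (B z y) := by
        simp only [map_add_sub_of_polar_eq_bilin hq, AddChar.map_add_eq_mul, mul_sum]
        exact sum_comm
    _ = ψ (q 0) * ∑ y, ψ (B 0 y) :=
        Fintype.sum_eq_single 0 fun z hz ↦ by rw [orthogonality z hz, mul_zero]
    _ = Fintype.card M := by simp [map_zero_of_polar_eq_bilin hq]

end GaussSum

/-- The nontrivial additive character `a ↦ (-1) ^ a` of `𝔽₂`, with values in `ℤ` so that its sums
count points. -/
def signChar : AddChar (ZMod 2) ℤ := AddChar.zmodChar 2 neg_one_sq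

theorem signChar_eq_two_mul_ite_sub_one :
    ∀ a : ZMod 2, signChar a = 2 * (if a = 0 then 1 else 0) - 1 := by
  decide

theorem signChar_eq_one_iff : ∀ {a : ZMod 2}, signChar a = 1 ↔ a = 0 := by
  decide

theorem sum_signChar {α : Type*} [Fintype α] (f : α → ZMod 2) :
    ∑ x, signChar (f x) = 2 * Nat.card {x // f x = 0} - Fintype.card α := by
  simp only [signChar_eq_two_mul_ite_sub_one, sum_sub_distrib, ← mul_sum, sum_boole]
  simp [Fintype.card_subtype]

section CharTwo

variable {V : Type*} [AddCommGroup V] [Module (ZMod 2) V] {q : V → ZMod 2}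
  {B : V →ₗ[ZMod 2] V →ₗ[ZMod 2] ZMod 2}

theorem signChar_compAddMonoidHom_ne_one {φ : V →ₗ[ZMod 2] ZMod 2} (hφ : φ ≠ 0) :
    signChar.compAddMonoidHom φ.toAddMonoidHom ≠ 1 := fun h ↦
  hφ <| LinearMap.ext fun x ↦ signChar_eq_one_iff.mp (DFunLike.congr_fun h x)

theorem two_mul_card_zeros_sub_card_sq [Fintype V] (hB : ∀ v, B v = 0 → v = 0)
    (hq : ∀ x y, polar q x y = B x y) :
    (2 * Nat.card {v // q v = 0} - Fintype.card V : ℤ) ^ 2 = Fintype.card V := by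
  have hψ (z : V) (hz : z ≠ 0) : signChar.compAddMonoidHom (B z).toAddMonoidHom ≠ 1 :=
    signChar_compAddMonoidHom_ne_one (mt (hB z) hz)
  simpa only [ZMod.neg_eq_self_mod_two, sum_signChar, ← sq] using
    sum_addChar_mul_sum_addChar_neg signChar hψ hq

end CharTwo

theorem eq_add_or_eq_sub_of_two_mul_sub_sq {n g : ℕ} (hg : 1 ≤ g)
    (h : (2 * n - 2 ^ (2 * g) : ℤ) ^ 2 = 2 ^ (2 * g)) :
    n = 2 ^ (2 * g - 1) + 2 ^ (g - 1) ∨ n = 2 ^ (2 * g - 1) - 2 ^ (g - 1) := by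
  have hdouble : (2 : ℤ) ^ (2 * g) = 2 * 2 ^ (2 * g - 1) := (mul_pow_sub_one (by lia) 2).symm
  have hdouble' : (2 : ℤ) ^ g = 2 * 2 ^ (g - 1) := (mul_pow_sub_one (by lia) 2).symm
  have hroot : (2 * n - 2 ^ (2 * g) : ℤ) ^ 2 = (2 ^ g) ^ 2 := by rw [h, ← pow_mul, mul_comm]
  rcases sq_eq_sq_iff_eq_or_eq_neg.mp hroot with hpos | hneg
  · left
    zify
    linarith
  · right
    have hadd : n + 2 ^ (g - 1) = 2 ^ (2 * g - 1) := by
      zify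
      linarith
    exact Nat.eq_sub_of_add_eq hadd

/-- A quadratic refinement of a nondegenerate alternating bilinear form on a
`2g`-dimensional `𝔽₂`-vector space has either `2^(2g-1) + 2^(g-1)` or
`2^(2g-1) - 2^(g-1)` zeros. -/
theorem quadratic_refinement_zero_count
    (V : Type*) [AddCommGroup V] [Module (ZMod 2) V] [Fintype V] (g : ℕ) (hg : 1 ≤ g)
    (hdim : Module.finrank (ZMod 2) V = 2 * g)
    (B : V →ₗ[ZMod 2] V →ₗ[ZMod 2] ZMod 2) (hB : ∀ v : V, B v v = 0)
    (hnd : ∀ v : V, B v = 0 → v = 0)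
    (q : V → ZMod 2) (hq : ∀ x y : V, q (x + y) + q x + q y = B x y) :
    Nat.card {v : V // q v = 0} = 2 ^ (2 * g - 1) + 2 ^ (g - 1) ∨
    Nat.card {v : V // q v = 0} = 2 ^ (2 * g - 1) - 2 ^ (g - 1) := by
  have hpolar (x y : V) : polar q x y = B x y := by
    rw [← hq, polar, CharTwo.sub_eq_add, CharTwo.sub_eq_add]
  have hcard : Fintype.card V = 2 ^ (2 * g) := by
    rw [Module.card_eq_pow_finrank (K := ZMod 2), ZMod.card, hdim]
  have hsq := two_mul_card_zeros_sub_card_sq hnd hpolar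
  rw [hcard] at hsq
  exact eq_add_or_eq_sub_of_two_mul_sub_sq hg (mod_cast hsq)
end

section
/- Let W be a finite-dimensional vector space over 𝔽₂ of dimension g ≥ 2 and let V = W × (Module.Dual (ZMod 2) W), with nondegenerate alternating form B ((a, α), (b, β)) = α b + β a. The group GL(W) of linear automorphisms of W acts on V by u • (a, α) = (u a, α ∘ u⁻¹), and this action preserves B. Then δ (a, α) = α a is the unique quadratic refinement of B that is invariant under this GL(W)-action, i.e. satisfying δ (u • v) = δ v for all u ∈ GL(W) and v ∈ V. -/
/-!
Two functions with the same polar form differ by an additive map, so uniqueness says that a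
`GL(W)`-invariant additive map on `W × W*` vanishes. Invariance kills every difference `u • v - v`.
When `φ c = 0`, the transvection `x ↦ x + φ x • c` produces `(c, 0)` as such a difference as soon as
`φ` takes the value `1`, and its inverse produces `(0, φ)` as soon as some functional takes the
value `1` at `c`. A surjection `W → R²` makes every vector and every functional a sum of two such
elements.
-/

open Module

lemma exists_addMonoidHom_eq_sub_of_polar_eq {M N : Type*} [AddCommGroup M] [AddCommGroup N]
    {q q' : M → N} (h : ∀ x y, QuadraticMap.polar q x y = QuadraticMap.polar q' x y) :
    ∃ F : M →+ N, ⇑F = q - q' := by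
  refine ⟨AddMonoidHom.mk' (q - q') fun x y ↦ ?_, rfl⟩
  have hxy : q (x + y) - q x - q y = q' (x + y) - q' x - q' y := h x y
  simp only [Pi.sub_apply]
  linear_combination (norm := abel) hxy

section

variable {R W A : Type*} [CommRing R] [AddCommGroup W] [Module R W]

/-- Invariance of a function on `W × W*` under the diagonal action `u • (w, α) = (u w, α ∘ u⁻¹)` of
`GL(W)`; the codomain is arbitrary, so that it applies to quadratic refinements and to the additive
maps by which they differ. -/
def IsGLInvariant (F : W × Dual R W → A) : Prop :=
  ∀ (u : W ≃ₗ[R] W) (v : W × Dual R W), F (u v.1, v.2 ∘ₗ (u.symm : W →ₗ[R] W)) = F v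

namespace IsGLInvariant

lemma sub [Sub A] {F G : W × Dual R W → A} (hF : IsGLInvariant F) (hG : IsGLInvariant G) :
    IsGLInvariant (F - G) :=
  fun u v ↦ congrArg₂ (· - ·) (hF u v) (hG u v)

variable [AddGroup A] {F : W × Dual R W →+ A}

lemma map_vector_eq_zero (hF : IsGLInvariant F) {φ : Dual R W} {c x : W}
    (hc : φ c = 0) (hx : φ x = 1) : F (c, 0) = 0 := by
  have hshift : F ((x, 0) + (c, 0)) = F (x, 0) := by
    simpa [LinearMap.transvection.apply, hx] using hF (LinearEquiv.transvection hc) (x, 0)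
  rwa [map_add, add_eq_left] at hshift

lemma map_functional_eq_zero (hF : IsGLInvariant F) {φ α : Dual R W} {c : W}
    (hc : φ c = 0) (hα : α c = 1) : F (0, φ) = 0 := by
  have hcomp : α ∘ₗ (LinearEquiv.transvection hc : W →ₗ[R] W) = α + φ := by
    ext y
    simp [LinearMap.transvection.apply, hα]
  have hshift : F ((0, α) + (0, φ)) = F (0, α) := by
    simpa only [map_zero, LinearEquiv.symm_symm, hcomp, Prod.mk_add_mk, add_zero] using
      hF (LinearEquiv.transvection hc).symm (0, α)
  rwa [map_add, add_eq_left] at hshift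

theorem eq_zero_of_surjective (hF : IsGLInvariant F) (p : W →ₗ[R] Fin 2 → R)
    (hp : Function.Surjective p) : F = 0 := by
  obtain ⟨e₀, he₀⟩ := hp (Pi.single 0 1)
  obtain ⟨e₁, he₁⟩ := hp (Pi.single 1 1)
  let f (i : Fin 2) : Dual R W := LinearMap.proj i ∘ₗ p
  have h₀₀ : f 0 e₀ = 1 := by simp [f, he₀]
  have h₀₁ : f 0 e₁ = 0 := by simp [f, he₁]
  have h₁₀ : f 1 e₀ = 0 := by simp [f, he₀]
  have h₁₁ : f 1 e₁ = 1 := by simp [f, he₁]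
  have hvector (w : W) : F (w, 0) = 0 := by
    have hsplit : (w, (0 : Dual R W)) = (w - f 0 w • e₀, 0) + (f 0 w • e₀, 0) := by simp
    rw [hsplit, map_add, hF.map_vector_eq_zero (φ := f 0) (by simp [h₀₀]) h₀₀,
      hF.map_vector_eq_zero (φ := f 1) (by simp [h₁₀]) h₁₁, add_zero]
  have hfunctional (α : Dual R W) : F (0, α) = 0 := by
    have hsplit : ((0 : W), α) = (0, α - α e₀ • f 0) + (0, α e₀ • f 0) := by simp
    rw [hsplit, map_add, hF.map_functional_eq_zero (c := e₀) (by simp [h₀₀]) h₀₀,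
      hF.map_functional_eq_zero (c := e₁) (by simp [h₀₁]) h₁₁, add_zero]
  refine AddMonoidHom.ext fun v ↦ ?_
  rw [← Prod.fst_add_snd v, map_add, hvector, hfunctional, add_zero, AddMonoidHom.zero_apply]

end IsGLInvariant

theorem IsGLInvariant.eq_of_polar_eq [AddCommGroup A] {q q' : W × Dual R W → A}
    (hq : IsGLInvariant q) (hq' : IsGLInvariant q')
    (hpolar : ∀ x y, QuadraticMap.polar q x y = QuadraticMap.polar q' x y)
    (p : W →ₗ[R] Fin 2 → R) (hp : Function.Surjective p) : q = q' := by
  obtain ⟨F, hF⟩ := exists_addMonoidHom_eq_sub_of_polar_eq hpolar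
  have hFinv : IsGLInvariant F := hF ▸ hq.sub hq'
  have hzero : F = 0 := hFinv.eq_zero_of_surjective p hp
  rw [← sub_eq_zero, ← hF, hzero]
  rfl

end

lemma exists_surjective_pi_of_le_finrank {R M : Type*} [Semiring R] [StrongRankCondition R]
    [AddCommMonoid M] [Module R M] [Module.Free R M] [Module.Finite R M] {n : ℕ}
    (h : n ≤ finrank R M) : ∃ p : M →ₗ[R] Fin n → R, Function.Surjective p :=
  ⟨LinearMap.funLeft R R (Fin.castLE h) ∘ₗ (finBasis R M).equivFun,
    (LinearMap.funLeft_surjective_of_injective R R _ (Fin.castLE_injective h)).comp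
      (finBasis R M).equivFun.surjective⟩

theorem delta_unique_GL_invariant_refinement_general
    {R W : Type*} [CommRing R] [AddCommGroup W] [Module R W]
    (p : W →ₗ[R] Fin 2 → R) (hp : Function.Surjective p)
    (B : W × Dual R W → W × Dual R W → R)
    (hBdef : ∀ x y : W × Dual R W, B x y = x.2 y.1 + y.2 x.1)
    (δ : W × Dual R W → R) (hδdef : ∀ x : W × Dual R W, δ x = x.2 x.1)
    (act : (W ≃ₗ[R] W) → W × Dual R W → W × Dual R W)
    (hact : ∀ (u : W ≃ₗ[R] W) (v : W × Dual R W),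
      act u v = (u v.1, v.2 ∘ₗ (u.symm : W →ₗ[R] W))) :
    (∀ (u : W ≃ₗ[R] W) (x y : W × Dual R W), B (act u x) (act u y) = B x y) ∧
    (∀ x y, QuadraticMap.polar δ x y = B x y) ∧
    (∀ (u : W ≃ₗ[R] W) (v : W × Dual R W), δ (act u v) = δ v) ∧
    (∀ q : W × Dual R W → R,
      (∀ x y, QuadraticMap.polar q x y = B x y) →
      (∀ (u : W ≃ₗ[R] W) (v : W × Dual R W), q (act u v) = q v) →
      q = δ) := by
  have hδpolar (x y : W × Dual R W) : QuadraticMap.polar δ x y = B x y := by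
    simp only [QuadraticMap.polar, hδdef, hBdef, Prod.fst_add, Prod.snd_add, map_add,
      LinearMap.add_apply]
    ring
  have hδinv (u : W ≃ₗ[R] W) (v : W × Dual R W) : δ (act u v) = δ v := by simp [hδdef, hact]
  refine ⟨fun u x y ↦ by simp [hBdef, hact], hδpolar, hδinv, fun q hqpolar hqinv ↦ ?_⟩
  simp only [hact] at hqinv hδinv
  exact IsGLInvariant.eq_of_polar_eq hqinv hδinv
    (fun x y ↦ (hqpolar x y).trans (hδpolar x y).symm) p hp

/-- On `V = W × W*` (for `W` an `𝔽₂`-vector space of dimension `g ≥ 2`) with the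
nondegenerate alternating form `B ((a,α),(b,β)) = α b + β a`, the group `GL(W)` acts by
`u • (a, α) = (u a, α ∘ u⁻¹)` preserving `B`, and `δ (a,α) = α a` is the unique
quadratic refinement of `B` invariant under this action. -/
theorem delta_unique_GL_invariant_refinement
    (W : Type*) [AddCommGroup W] [Module (ZMod 2) W] [FiniteDimensional (ZMod 2) W]
    (g : ℕ) (hg : 2 ≤ g) (hdim : Module.finrank (ZMod 2) W = g)
    (B : W × Module.Dual (ZMod 2) W → W × Module.Dual (ZMod 2) W → ZMod 2)
    (hBdef : ∀ x y : W × Module.Dual (ZMod 2) W, B x y = x.2 y.1 + y.2 x.1)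
    (δ : W × Module.Dual (ZMod 2) W → ZMod 2)
    (hδdef : ∀ x : W × Module.Dual (ZMod 2) W, δ x = x.2 x.1)
    (act : (W ≃ₗ[ZMod 2] W) → W × Module.Dual (ZMod 2) W → W × Module.Dual (ZMod 2) W)
    (hact : ∀ (u : W ≃ₗ[ZMod 2] W) (v : W × Module.Dual (ZMod 2) W),
      act u v = (u v.1, v.2 ∘ₗ (u.symm : W →ₗ[ZMod 2] W))) :
    -- the action preserves `B`
    (∀ (u : W ≃ₗ[ZMod 2] W) (x y : W × Module.Dual (ZMod 2) W),
      B (act u x) (act u y) = B x y) ∧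
    -- `δ` is a quadratic refinement of `B` invariant under the action
    (∀ x y, δ (x + y) + δ x + δ y = B x y) ∧
    (∀ (u : W ≃ₗ[ZMod 2] W) (v : W × Module.Dual (ZMod 2) W), δ (act u v) = δ v) ∧
    -- and it is the unique such quadratic refinement
    (∀ q : W × Module.Dual (ZMod 2) W → ZMod 2,
      (∀ x y, q (x + y) + q x + q y = B x y) →
      (∀ (u : W ≃ₗ[ZMod 2] W) (v : W × Module.Dual (ZMod 2) W), q (act u v) = q v) →
      q = δ) := by
  obtain ⟨p, hp⟩ := exists_surjective_pi_of_le_finrank (hg.trans_eq hdim.symm)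
  simpa only [QuadraticMap.polar, CharTwo.sub_eq_add] using
    delta_unique_GL_invariant_refinement_general p hp B hBdef δ hδdef act hact
end

section
/- Let V be a finite-dimensional vector space over 𝔽₂, B an alternating bilinear form on V, and q a quadratic refinement of B. If W is a linear subspace of V and t ∈ V is such that q is constant on the coset t + W (i.e. q (t + w) = q t for all w ∈ W), then W is totally isotropic for B: B w w′ = 0 for all w, w′ ∈ W. -/
open QuadraticMap (polar)

section Polar

variable {M N : Type*} [AddCommGroup M] [AddCommGroup N]

theorem add_eq_left_iff_eq_neg_polar {q : M → N} {t w : M} :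
    q (t + w) = q t ↔ q w = -polar q t w := by
  rw [QuadraticMap.map_add q, add_assoc, add_eq_left, eq_neg_iff_add_eq_zero]

theorem polar_eq_add_add_of_charTwo {R : Type*} [Ring R] [CharP R 2] (q : M → R) (x y : M) :
    polar q x y = q (x + y) + q x + q y := by
  simp only [polar, CharTwo.sub_eq_add]

theorem coset_constant_refinement_isotropic_general {S : Type*} [SetLike S M] [AddMemClass S M]
    {q : M → N} {W : S} {t : M}
    (hadd : ∀ x ∈ W, ∀ y ∈ W, polar q t (x + y) = polar q t x + polar q t y)
    (hconst : ∀ w ∈ W, q (t + w) = q t) :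
    ∀ w ∈ W, ∀ w' ∈ W, polar q w w' = 0 := by
  have q_eq : ∀ w ∈ W, q w = -polar q t w := fun w hw ↦
    add_eq_left_iff_eq_neg_polar.mp (hconst w hw)
  intro w hw w' hw'
  calc
    polar q w w' = q (w + w') - q w - q w' := rfl
    _ = -polar q t (w + w') - -polar q t w - -polar q t w' := by
      rw [q_eq _ (add_mem hw hw'), q_eq w hw, q_eq w' hw']
    _ = 0 := by
      rw [hadd w hw w' hw']
      abel

end Polar

/-- If a quadratic refinement `q` of an alternating bilinear form `B` is constant on a
coset `t + W` of a subspace `W`, then `W` is totally isotropic for `B`. -/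
theorem coset_constant_refinement_isotropic
    (V : Type*) [AddCommGroup V] [Module (ZMod 2) V] [FiniteDimensional (ZMod 2) V]
    (B : V →ₗ[ZMod 2] V →ₗ[ZMod 2] ZMod 2) (hB : ∀ v : V, B v v = 0)
    (q : V → ZMod 2) (hq : ∀ x y : V, q (x + y) + q x + q y = B x y)
    (W : Submodule (ZMod 2) V) (t : V) (hconst : ∀ w ∈ W, q (t + w) = q t) :
    ∀ w ∈ W, ∀ w' ∈ W, B w w' = 0 := by
  have polar_eq (x y : V) : polar q x y = B x y :=
    (polar_eq_add_add_of_charTwo q x y).trans (hq x y)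
  simpa only [polar_eq] using coset_constant_refinement_isotropic_general
    (fun x _ y _ ↦ by simp only [polar_eq, map_add]) hconst
end

section
/- Let V be a vector space over 𝔽₂ of dimension 2g, B a nondegenerate alternating bilinear form on V, and q a quadratic refinement of B. Then q is not constant on any coset t + W of a linear subspace W of V with dim W > g. Equivalently, if q (t + w) = q t for all w in a subspace W, then dim W ≤ g. -/
/-!
If `q` is constant on `t + W`, the polarization identity at `t` and `w` collapses to
`q w = -B t w` for `w ∈ W`. Hence `q` is additive on `W`, that is, `W` is totally isotropic for
its polar form `B`. An isotropic subspace lies in its own orthogonal complement, so in the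
nondegenerate case its dimension is at most half of `dim V`.
-/

open Module QuadraticMap

theorem le_orthogonalBilin_of_const_on_coset {R M N : Type*} [CommRing R]
    [AddCommGroup M] [Module R M] [AddCommGroup N] [Module R N]
    {B : M →ₗ[R] M →ₗ[R] N} {q : M → N} (hq : ∀ x y, polar q x y = B x y)
    {W : Submodule R M} {t : M} (hconst : ∀ w ∈ W, q (t + w) = q t) :
    W ≤ W.orthogonalBilin B := by
  have q_eq_neg : ∀ w ∈ W, q w = -B t w := fun w hw ↦ by
    rw [← hq, polar, hconst w hw, sub_self, zero_sub, neg_neg]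
  intro y hy x hx
  calc
    B x y = q (x + y) - q x - q y := (hq x y).symm
    _ = -B t (x + y) - -B t x - -B t y := by
      rw [q_eq_neg _ (W.add_mem hx hy), q_eq_neg x hx, q_eq_neg y hy]
    _ = 0 := by rw [map_add]; abel

theorem two_mul_finrank_le_of_le_orthogonal {K V : Type*} [Field K] [AddCommGroup V]
    [Module K V] [FiniteDimensional K V] {B : LinearMap.BilinForm K V} {W : Submodule K V}
    (hW : W ≤ B.orthogonal W) :
    2 * finrank K W ≤ finrank K V + finrank K (W ⊓ B.ker : Submodule K V) :=
  calc
    2 * finrank K W = finrank K W + finrank K W := two_mul _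
    _ ≤ finrank K W + finrank K (B.orthogonal W) :=
      Nat.add_le_add_left (Submodule.finrank_mono hW) _
    _ = finrank K V + finrank K (W ⊓ B.ker : Submodule K V) :=
      LinearMap.BilinForm.finrank_add_finrank_orthogonal' W

theorem coset_constant_refinement_dim_le_general {K V : Type*} [Field K] [AddCommGroup V]
    [Module K V] [FiniteDimensional K V] {B : LinearMap.BilinForm K V} {q : V → K}
    (hq : ∀ x y, polar q x y = B x y) {W : Submodule K V} {t : V}
    (hconst : ∀ w ∈ W, q (t + w) = q t) :
    2 * finrank K W ≤ finrank K V + finrank K (W ⊓ B.ker : Submodule K V) :=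
  two_mul_finrank_le_of_le_orthogonal (le_orthogonalBilin_of_const_on_coset hq hconst)

/-- A quadratic refinement of a nondegenerate alternating bilinear form on a
`2g`-dimensional `𝔽₂`-vector space cannot be constant on a coset of a subspace of
dimension greater than `g`: if `q (t + w) = q t` for all `w ∈ W`, then `dim W ≤ g`. -/
theorem coset_constant_refinement_dim_le
    (V : Type*) [AddCommGroup V] [Module (ZMod 2) V] [FiniteDimensional (ZMod 2) V]
    (g : ℕ) (hdim : Module.finrank (ZMod 2) V = 2 * g)
    (B : V →ₗ[ZMod 2] V →ₗ[ZMod 2] ZMod 2) (hB : ∀ v : V, B v v = 0)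
    (hnd : ∀ v : V, B v = 0 → v = 0)
    (q : V → ZMod 2) (hq : ∀ x y : V, q (x + y) + q x + q y = B x y)
    (W : Submodule (ZMod 2) V) (t : V) (hconst : ∀ w ∈ W, q (t + w) = q t) :
    Module.finrank (ZMod 2) W ≤ g := by
  have hpolar : ∀ x y, polar q x y = B x y := by
    simpa only [polar, CharTwo.sub_eq_add] using hq
  have hle := coset_constant_refinement_dim_le_general hpolar hconst
  rw [LinearMap.ker_eq_bot'.2 hnd, inf_bot_eq, finrank_bot] at hle
  lia
end
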